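/- arXiv:1710.08837 — 3 statements merged into one kernel-verified Lean document; each statement's English description precedes it below -/
import Mathlib

section
/- For each covering pair T' ⋗ T in tors Λ, there exists an indecomposable module M, unique up to isomorphism, such that T' = Filt(T ∪ {M}); moreover this M is a minimal extending module for T, so the map sending T' = Filt(T ∪ {M}) to [M] is inverse to the bijection η_T : [M] ↦ Filt(T ∪ {M}) from ME(T) to the upper covers of T. -/
/-!
Common definitions: the category `mod Λ` of finite(-dimensional) left `Λ`-modules,
torsion(-free) classes, filtration closures, bricks, minimal (co-)extending modules,
and the lattice-theoretic notions for `tors Λ` (ordered by containment).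
-/

/-- A bundled (left) `Λ`-module with carrier in `Type`. -/
structure Mdl (Λ : Type) [Ring Λ] : Type 1 where
  carrier : Type
  [isAddCommGroup : AddCommGroup carrier]
  [isModule : Module Λ carrier]

attribute [instance] Mdl.isAddCommGroup Mdl.isModule

instance {Λ : Type} [Ring Λ] : CoeSort (Mdl Λ) Type :=
  ⟨Mdl.carrier⟩

variable (Λ : Type) [Ring Λ]

/-- Bundle a module. -/
def Mdl.of (X : Type) [AddCommGroup X] [Module Λ X] : Mdl Λ :=
  { carrier := X }

/-- `M` and `N` are isomorphic `Λ`-modules. -/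
def MIso (M N : Mdl Λ) : Prop :=
  Nonempty (M.carrier ≃ₗ[Λ] N.carrier)

/-- `N` is a factor (quotient) module of `M`. -/
def IsFactor (M N : Mdl Λ) : Prop :=
  ∃ f : M.carrier →ₗ[Λ] N.carrier, Function.Surjective f

/-- `N` is a proper factor of `M` (a quotient by a nonzero submodule). -/
def IsProperFactor (M N : Mdl Λ) : Prop :=
  ∃ f : M.carrier →ₗ[Λ] N.carrier, Function.Surjective f ∧ ¬ Function.Injective f

/-- `N` is (isomorphic to) a submodule of `M`. -/
def IsSubmoduleOf (N M : Mdl Λ) : Prop :=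
  ∃ f : N.carrier →ₗ[Λ] M.carrier, Function.Injective f

/-- `N` is (isomorphic to) a proper submodule of `M`. -/
def IsProperSubmoduleOf (N M : Mdl Λ) : Prop :=
  ∃ f : N.carrier →ₗ[Λ] M.carrier, Function.Injective f ∧ ¬ Function.Surjective f

/-- `D` is (isomorphic to) a direct summand of `N`. -/
def IsSummand (D N : Mdl Λ) : Prop :=
  ∃ (i : D.carrier →ₗ[Λ] N.carrier) (p : N.carrier →ₗ[Λ] D.carrier),
    p.comp i = LinearMap.id

/-- `0 → A --f--> M --g--> B → 0` is a short exact sequence. -/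
def IsSES {A M B : Mdl Λ} (f : A.carrier →ₗ[Λ] M.carrier)
    (g : M.carrier →ₗ[Λ] B.carrier) : Prop :=
  Function.Injective f ∧ Function.Surjective g ∧ LinearMap.range f = LinearMap.ker g

/-- The short exact sequence `0 → A --f--> M --g--> B → 0` splits. -/
def SplitsSES {A M B : Mdl Λ} (_f : A.carrier →ₗ[Λ] M.carrier)
    (g : M.carrier →ₗ[Λ] B.carrier) : Prop :=
  ∃ s : B.carrier →ₗ[Λ] M.carrier, g.comp s = LinearMap.id

/-- `M` is an extension of `B` by `A`, i.e. there is a s.e.s. `0 → A → M → B → 0`. -/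
def ExtOf (M A B : Mdl Λ) : Prop :=
  ∃ (f : A.carrier →ₗ[Λ] M.carrier) (g : M.carrier →ₗ[Λ] B.carrier), IsSES Λ f g

/-- A torsion class in `mod Λ`: a class of finite(-dimensional) modules containing `0`
and closed under isomorphisms, factor modules and extensions. -/
structure IsTorsionClass (T : Set (Mdl Λ)) : Prop where
  fin : ∀ M ∈ T, Module.Finite Λ M.carrier
  zero_mem : ∀ M : Mdl Λ, Subsingleton M.carrier → M ∈ T
  iso_closed : ∀ M ∈ T, ∀ N : Mdl Λ, MIso Λ M N → N ∈ T
  factor_closed : ∀ M ∈ T, ∀ N : Mdl Λ, IsFactor Λ M N → N ∈ T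
  ext_closed : ∀ A ∈ T, ∀ B ∈ T, ∀ M : Mdl Λ, ExtOf Λ M A B → M ∈ T

/-- A torsion-free class in `mod Λ`: a class of finite(-dimensional) modules containing `0`
and closed under isomorphisms, submodules and extensions. -/
structure IsTorsionFreeClass (F : Set (Mdl Λ)) : Prop where
  fin : ∀ M ∈ F, Module.Finite Λ M.carrier
  zero_mem : ∀ M : Mdl Λ, Subsingleton M.carrier → M ∈ F
  iso_closed : ∀ M ∈ F, ∀ N : Mdl Λ, MIso Λ M N → N ∈ F
  sub_closed : ∀ M ∈ F, ∀ N : Mdl Λ, IsSubmoduleOf Λ N M → N ∈ F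
  ext_closed : ∀ A ∈ F, ∀ B ∈ F, ∀ M : Mdl Λ, ExtOf Λ M A B → M ∈ F

/-- `Filt S M`: `M` admits a filtration `0 = M₀ ⊆ M₁ ⊆ ⋯ ⊆ M_l = M` whose successive
quotients are isomorphic to modules in `S`. -/
inductive Filt (S : Set (Mdl Λ)) : Mdl Λ → Prop
  | of_subsingleton (M : Mdl Λ) (h : Subsingleton M.carrier) : Filt S M
  | step (M : Mdl Λ) (N : Submodule Λ M.carrier) (X : Mdl Λ) (hX : X ∈ S)
      (hN : Filt S (Mdl.of Λ N)) (e : Nonempty ((M.carrier ⧸ N) ≃ₗ[Λ] X.carrier)) :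
      Filt S M

/-- The filtration closure `Filt(S)` as a set of modules. -/
def FiltSet (S : Set (Mdl Λ)) : Set (Mdl Λ) := {M | Filt Λ S M}

/-- `Gen(M)`: the class of factor modules of finite direct sums of copies of `M`. -/
def GenSet (M : Mdl Λ) : Set (Mdl Λ) :=
  {N | ∃ (n : ℕ) (f : (Fin n → M.carrier) →ₗ[Λ] N.carrier), Function.Surjective f}

/-- `T^⊥ = {X ∈ mod Λ : Hom_Λ(N, X) = 0 for all N ∈ T}`. -/
def Perp (T : Set (Mdl Λ)) : Set (Mdl Λ) :=
  {X | Module.Finite Λ X.carrier ∧ ∀ N ∈ T, ∀ f : N.carrier →ₗ[Λ] X.carrier, f = 0}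

/-- A brick: a module (in `mod Λ`) whose endomorphism ring is a division ring,
i.e. it is nonzero and every nonzero endomorphism is invertible. -/
def IsBrick (M : Mdl Λ) : Prop :=
  Module.Finite Λ M.carrier ∧ Nontrivial M.carrier ∧
    ∀ f : M.carrier →ₗ[Λ] M.carrier, f ≠ 0 → Function.Bijective f

/-- An indecomposable module: nonzero, and not the direct sum of two nonzero submodules. -/
def Indec (M : Mdl Λ) : Prop :=
  Nontrivial M.carrier ∧
    ∀ p q : Submodule Λ M.carrier, IsCompl p q → p = ⊥ ∨ q = ⊥

/-- `M` is a minimal extending module for the torsion class `T`: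
(P1) every proper factor of `M` is in `T`;
(P2) if `0 → M → X → N → 0` is non-split exact with `N ∈ T`, then `X ∈ T`;
(P3) `Hom_Λ(T, M) = 0`. -/
structure IsMinExt (T : Set (Mdl Λ)) (M : Mdl Λ) : Prop where
  fin : Module.Finite Λ M.carrier
  p1 : ∀ N : Mdl Λ, IsProperFactor Λ M N → N ∈ T
  p2 : ∀ (X N : Mdl Λ) (f : M.carrier →ₗ[Λ] X.carrier) (g : X.carrier →ₗ[Λ] N.carrier),
      IsSES Λ f g → ¬ SplitsSES Λ f g → N ∈ T → X ∈ T
  p3 : ∀ N ∈ T, ∀ f : N.carrier →ₗ[Λ] M.carrier, f = 0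

/-- `M` is a minimal co-extending module for the torsion-free class `F`:
(P1') every proper submodule of `M` is in `F`;
(P2') if `0 → F' → X → M → 0` is non-split exact with `F' ∈ F`, then `X ∈ F`;
(P3') `Hom_Λ(M, F) = 0`. -/
structure IsMinCoExt (F : Set (Mdl Λ)) (M : Mdl Λ) : Prop where
  fin : Module.Finite Λ M.carrier
  p1 : ∀ N : Mdl Λ, IsProperSubmoduleOf Λ N M → N ∈ F
  p2 : ∀ (X F' : Mdl Λ) (f : F'.carrier →ₗ[Λ] X.carrier) (g : X.carrier →ₗ[Λ] M.carrier),
      IsSES Λ f g → ¬ SplitsSES Λ f g → F' ∈ F → X ∈ F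
  p3 : ∀ F' ∈ F, ∀ f : M.carrier →ₗ[Λ] F'.carrier, f = 0

/-- `T'` covers `T` in the lattice `tors Λ` of torsion classes ordered by containment. -/
def TorsCovers (T' T : Set (Mdl Λ)) : Prop :=
  IsTorsionClass Λ T' ∧ IsTorsionClass Λ T ∧ T ⊂ T' ∧
    ∀ Y : Set (Mdl Λ), IsTorsionClass Λ Y → T ⊂ Y → Y ⊆ T' → Y = T'

/-- `F'` covers `F` in the lattice `torf Λ` of torsion-free classes ordered by containment. -/
def TorfCovers (F' F : Set (Mdl Λ)) : Prop :=
  IsTorsionFreeClass Λ F' ∧ IsTorsionFreeClass Λ F ∧ F ⊂ F' ∧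
    ∀ Y : Set (Mdl Λ), IsTorsionFreeClass Λ Y → F ⊂ Y → Y ⊆ F' → Y = F'

/-- The join `⋁ A` of a family of torsion classes in `tors Λ`: the smallest torsion
class containing all members of `A`. -/
def TorsJoin (A : Set (Set (Mdl Λ))) : Set (Mdl Λ) :=
  ⋂₀ {T : Set (Mdl Λ) | IsTorsionClass Λ T ∧ ∀ S ∈ A, S ⊆ T}

/-- A completely join-irreducible element of `tors Λ`: a torsion class `T` such that
`T ∈ A` whenever `A` is a set of torsion classes with `⋁ A = T`. -/
def CompletelyJoinIrred (T : Set (Mdl Λ)) : Prop :=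
  IsTorsionClass Λ T ∧
    ∀ A : Set (Set (Mdl Λ)), (∀ S ∈ A, IsTorsionClass Λ S) → TorsJoin Λ A = T → T ∈ A

/-- The join representation `⋁ A` is irredundant in `tors Λ`:
every proper subset has strictly smaller join. -/
def TorsIrredundant (A : Set (Set (Mdl Λ))) : Prop :=
  ∀ B : Set (Set (Mdl Λ)), B ⊂ A → TorsJoin Λ B ⊂ TorsJoin Λ A

/-- `A` is the canonical join representation of its join in `tors Λ` (equivalently, a face
of the canonical join complex `Γ(tors Λ)`): `⋁ A` is irredundant, and `A ≪ B` for every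
irredundant join representation `⋁ B` of the same element. -/
def TorsCJR (A : Set (Set (Mdl Λ))) : Prop :=
  (∀ S ∈ A, IsTorsionClass Λ S) ∧ TorsIrredundant Λ A ∧
    ∀ B : Set (Set (Mdl Λ)), (∀ S ∈ B, IsTorsionClass Λ S) →
      TorsJoin Λ B = TorsJoin Λ A → TorsIrredundant Λ B → ∀ a ∈ A, ∃ b ∈ B, a ⊆ b

/-- `M` and `N` are hom-orthogonal: `Hom_Λ(M, N) = 0` and `Hom_Λ(N, M) = 0`. -/
def HomOrthogonal (M N : Mdl Λ) : Prop :=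
  (∀ f : M.carrier →ₗ[Λ] N.carrier, f = 0) ∧ ∀ f : N.carrier →ₗ[Λ] M.carrier, f = 0

/-!
Among the factors of a module in `T'` but not in `T`, choose `M` minimal subject to `M ∉ T`. Every
proper factor of `M` lies in `T`, and `Hom(T, M) = 0`, since the image of a nonzero map from `T`
would exhibit `M` as an extension of two modules in `T`. So a nonzero endomorphism of `M`
is injective, and `M` is a brick. The modules in `T'` without nonzero maps to `M` form a torsion
class containing `T` but not `M`, hence equal to `T` by the covering hypothesis; so an extension `X`
of `N ∈ T` by `M` that is not in `T` has a nonzero map to `M`, and composing with `M → X` gives an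
automorphism of `M`, which splits the extension. Likewise `Filt(T ∪ {M})` is a torsion class
strictly above `T`, so it is `T'`.

For uniqueness, a nonzero module in `Filt(T ∪ {N})` with no nonzero maps from `T` contains a copy
of `N`, the bottom layer of its filtration. If `T' = Filt(T ∪ {N})`, then `N` embeds in `M`, hence
`M` embeds in `N`, and both embeddings are isomorphisms because `M` has finite length.
-/

section ExactSequences

variable {R A B C D : Type*} [Ring R] [AddCommGroup A] [AddCommGroup B] [AddCommGroup C]
  [AddCommGroup D] [Module R A] [Module R B] [Module R C] [Module R D]

lemma exists_comp_eq_of_comp_eq_zero {f : A →ₗ[R] B} {g : B →ₗ[R] C}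
    (hfg : Function.Exact f g) (hg : Function.Surjective g) {h : B →ₗ[R] D}
    (hhf : h ∘ₗ f = 0) : ∃ h' : C →ₗ[R] D, h' ∘ₗ g = h := by
  refine ⟨(LinearMap.range f).liftQ h (LinearMap.range_le_ker_iff.2 hhf) ∘ₗ
    (hfg.linearEquivOfSurjective hg).symm, ?_⟩
  ext b
  simp

lemma eq_zero_of_comp_eq_zero {f : A →ₗ[R] B} {g : B →ₗ[R] C} (hfg : Function.Exact f g)
    (hg : Function.Surjective g) (hC : ∀ h : C →ₗ[R] D, h = 0) {h : B →ₗ[R] D}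
    (hhf : h ∘ₗ f = 0) : h = 0 := by
  obtain ⟨h', rfl⟩ := exists_comp_eq_of_comp_eq_zero hfg hg hhf
  rw [hC h', LinearMap.zero_comp]

lemma exists_section_of_bijective_comp {f : A →ₗ[R] B} {g : B →ₗ[R] C}
    (hfg : Function.Exact f g) (hf : Function.Injective f) (hg : Function.Surjective g)
    {h : B →ₗ[R] A} (hhf : Function.Bijective (h ∘ₗ f)) :
    ∃ s : C →ₗ[R] B, g ∘ₗ s = LinearMap.id := by
  let e := LinearEquiv.ofBijective (h ∘ₗ f) hhf
  have hretract : ∃ r : B →ₗ[R] A, r ∘ₗ f = LinearMap.id :=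
    ⟨e.symm ∘ₗ h, LinearMap.ext e.symm_apply_apply⟩
  exact ((hfg.split_tfae hf hg).out 0 1).2 hretract

end ExactSequences

section TorsionClasses

variable {Λ} {A B M N X : Mdl Λ} {S T T' : Set (Mdl Λ)}

lemma IsSES.exact {f : A →ₗ[Λ] M} {g : M →ₗ[Λ] B} (h : IsSES Λ f g) : Function.Exact f g :=
  LinearMap.exact_iff.2 h.2.2.symm

lemma ExtOf.of_submodule (p : Submodule Λ M) : ExtOf Λ M (Mdl.of Λ p) (Mdl.of Λ (M ⧸ p)) :=
  ⟨p.subtype, p.mkQ, p.injective_subtype, p.mkQ_surjective,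
    p.range_subtype.trans p.ker_mkQ.symm⟩

lemma IsProperFactor.of_submodule {p : Submodule Λ M} (hp : p ≠ ⊥) :
    IsProperFactor Λ M (Mdl.of Λ (M ⧸ p)) :=
  ⟨p.mkQ, p.mkQ_surjective, fun h => hp (p.ker_mkQ.symm.trans (LinearMap.ker_eq_bot.2 h))⟩

lemma IsBrick.indec (hM : IsBrick Λ M) : Indec Λ M := by
  refine ⟨hM.2.1, fun p q hpq => ?_⟩
  by_cases hπ : p.projection q hpq = 0
  · left
    rw [← Submodule.range_projection hpq, hπ, LinearMap.range_zero]
  · right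
    rw [← Submodule.ker_projection hpq, LinearMap.ker_eq_bot]
    exact (hM.2.2 _ hπ).injective

lemma Filt.of_mem (hX : X ∈ S) : Filt Λ S X :=
  Filt.step X ⊥ X hX
    (Filt.of_subsingleton _ (inferInstanceAs (Subsingleton (⊥ : Submodule Λ X))))
    ⟨Submodule.quotEquivOfEqBot _ rfl⟩

lemma Filt.of_linearEquiv (hM : Filt Λ S M) (e : M ≃ₗ[Λ] N) : Filt Λ S N := by
  induction hM generalizing N with
  | of_subsingleton M _ => exact .of_subsingleton N e.symm.toEquiv.subsingleton
  | step M p X hX _ eX ih =>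
    obtain ⟨eX⟩ := eX
    exact .step N (p.map e.toLinearMap) X hX (ih (e.submoduleMap p))
      ⟨(Submodule.Quotient.equiv p (p.map e.toLinearMap) e rfl).symm.trans eX⟩

lemma ExtOf.comap_of_isSES {f : A →ₗ[Λ] M} {g : M →ₗ[Λ] B} (h : IsSES Λ f g)
    (p : Submodule Λ B) : ExtOf Λ (Mdl.of Λ (p.comap g)) A (Mdl.of Λ p) := by
  have hfp (a : A) : f a ∈ p.comap g := by simp [h.exact.apply_apply_eq_zero a]
  let f' : A →ₗ[Λ] p.comap g := f.codRestrict (p.comap g) hfp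
  let g' : p.comap g →ₗ[Λ] p := g.restrict fun _ hx => hx
  have hf' : Function.Injective f' := (LinearMap.injective_codRestrict_iff hfp).2 h.1
  have hg' : Function.Surjective g' := by
    rintro ⟨y, hy⟩
    obtain ⟨x, rfl⟩ := h.2.1 y
    exact ⟨⟨x, hy⟩, rfl⟩
  have hexact : Function.Exact f' g' := by
    rintro ⟨x, hx⟩
    simpa [f', g', Subtype.ext_iff] using h.exact x
  exact ⟨f', g', hf', hg', (LinearMap.exact_iff.1 hexact).symm⟩

lemma Filt.of_extOf (hA : Filt Λ S A) (hB : Filt Λ S B) (hM : ExtOf Λ M A B) : Filt Λ S M := by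
  induction hB generalizing M with
  | of_subsingleton B _ =>
    obtain ⟨f, g, h⟩ := hM
    have hf : Function.Surjective f := fun x => (h.exact x).1 (Subsingleton.elim _ _)
    exact hA.of_linearEquiv (.ofBijective f ⟨h.1, hf⟩)
  | step B p X hX _ eX ih =>
    obtain ⟨f, g, h⟩ := hM
    obtain ⟨eX⟩ := eX
    have hker : p.comap g = LinearMap.ker (p.mkQ ∘ₗ g) := by
      rw [LinearMap.ker_comp, Submodule.ker_mkQ]
    have hsurj : Function.Surjective (p.mkQ ∘ₗ g) := p.mkQ_surjective.comp h.2.1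
    exact .step M (p.comap g) X hX (ih (.comap_of_isSES h p))
      ⟨(Submodule.quotEquivOfEq _ _ hker).trans
        (((p.mkQ ∘ₗ g).quotKerEquivOfSurjective hsurj).trans eX)⟩

lemma Filt.of_isFactor (hS : ∀ X ∈ S, ∀ Y, IsFactor Λ X Y → Filt Λ S Y) (hM : Filt Λ S M)
    (hN : IsFactor Λ M N) : Filt Λ S N := by
  induction hM generalizing N with
  | of_subsingleton M _ =>
    obtain ⟨f, hf⟩ := hN
    exact .of_subsingleton N hf.subsingleton
  | step M p X hX _ eX ih =>
    obtain ⟨f, hf⟩ := hN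
    obtain ⟨eX⟩ := eX
    let q : (M ⧸ p) →ₗ[Λ] N ⧸ p.map f := p.mapQ (p.map f) f (Submodule.le_comap_map f p)
    have hq : Function.Surjective q := by
      rw [← LinearMap.range_eq_top, Submodule.range_mapQ, LinearMap.range_eq_top.2 hf,
        Submodule.map_top, Submodule.range_mkQ]
    have hsub : Filt Λ S (Mdl.of Λ (p.map f)) :=
      ih ⟨f.submoduleMap p, f.submoduleMap_surjective p⟩
    have htop : Filt Λ S (Mdl.of Λ (N ⧸ p.map f)) :=
      hS X hX _ ⟨q ∘ₗ eX.symm, hq.comp eX.symm.surjective⟩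
    exact hsub.of_extOf htop (.of_submodule _)

lemma Filt.finite (hS : ∀ X ∈ S, Module.Finite Λ X) (hM : Filt Λ S M) : Module.Finite Λ M := by
  induction hM with
  | of_subsingleton M _ => infer_instance
  | step M p X hX _ eX ih =>
    obtain ⟨eX⟩ := eX
    have : Module.Finite Λ X := hS X hX
    have : Module.Finite Λ p := ih
    have : Module.Finite Λ (M ⧸ p) := .equiv eX.symm
    exact .of_submodule_quotient p

lemma isTorsionClass_filtSet (hfin : ∀ X ∈ S, Module.Finite Λ X)
    (hfac : ∀ X ∈ S, ∀ Y, IsFactor Λ X Y → Filt Λ S Y) : IsTorsionClass Λ (FiltSet Λ S) where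
  fin _ hM := hM.finite hfin
  zero_mem := .of_subsingleton
  iso_closed _ hM _ := fun ⟨e⟩ => hM.of_linearEquiv e
  factor_closed _ hM _ hN := hM.of_isFactor hfac hN
  ext_closed _ hA _ hB _ hM := hA.of_extOf hB hM

lemma IsTorsionClass.filtSet_subset (hT : IsTorsionClass Λ T) (hS : S ⊆ T) :
    FiltSet Λ S ⊆ T := by
  intro M hM
  induction hM with
  | of_subsingleton M h => exact hT.zero_mem M h
  | step M p X hX _ eX ih =>
    obtain ⟨eX⟩ := eX
    have hquot : Mdl.of Λ (M ⧸ p) ∈ T := hT.iso_closed X (hS hX) _ ⟨eX.symm⟩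
    exact hT.ext_closed _ ih _ hquot M (.of_submodule p)

lemma Filt.exists_injective (hM : Filt Λ S M) (hM0 : Nontrivial M) :
    ∃ X ∈ S, Nontrivial X ∧ ∃ f : X →ₗ[Λ] M, Function.Injective f := by
  induction hM with
  | of_subsingleton M h => exact absurd h (not_subsingleton M)
  | step M p X hX _ eX ih =>
    obtain ⟨eX⟩ := eX
    by_cases hp : p = ⊥
    · let e : X ≃ₗ[Λ] M := eX.symm.trans (p.quotEquivOfEqBot hp)
      exact ⟨X, hX, e.toEquiv.nontrivial, e, e.injective⟩
    · obtain ⟨Y, hY, hY0, f, hf⟩ := ih (Submodule.nontrivial_iff_ne_bot.2 hp)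
      exact ⟨Y, hY, hY0, p.subtype ∘ₗ f, p.injective_subtype.comp hf⟩

lemma Filt.exists_injective_of_insert (hM : Filt Λ (insert N T) M) (hM0 : Nontrivial M)
    (hTM : ∀ X ∈ T, ∀ f : X →ₗ[Λ] M, f = 0) : ∃ f : N →ₗ[Λ] M, Function.Injective f := by
  obtain ⟨Y, rfl | hY, _, f, hf⟩ := hM.exists_injective hM0
  · exact ⟨f, hf⟩
  · obtain ⟨y, hy⟩ := exists_ne (0 : Y)
    exact absurd (by simp [hTM Y hY f]) ((map_ne_zero_iff f hf).2 hy)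

lemma mIso_of_filt_insert [IsArtinian Λ M] (hM0 : Nontrivial M) (hN0 : Nontrivial N)
    (hTM : ∀ X ∈ T, ∀ f : X →ₗ[Λ] M, f = 0) (hM : Filt Λ (insert N T) M)
    (hN : Filt Λ (insert M T) N) : MIso Λ N M := by
  obtain ⟨f, hf⟩ := hM.exists_injective_of_insert hM0 hTM
  have hTN (X : Mdl Λ) (hX : X ∈ T) (g : X →ₗ[Λ] N) : g = 0 :=
    (LinearMap.cancel_left hf).1 ((hTM X hX (f ∘ₗ g)).trans (LinearMap.comp_zero f).symm)
  obtain ⟨g, hg⟩ := hN.exists_injective_of_insert hN0 hTN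
  have hfg : Function.Surjective (f ∘ₗ g) :=
    IsArtinian.surjective_of_injective_endomorphism _ (hf.comp hg)
  exact ⟨.ofBijective f ⟨hf, .of_comp hfg⟩⟩

lemma nontrivial_of_ssubset_filtSet_insert (hT : IsTorsionClass Λ T)
    (hN : T ⊂ FiltSet Λ (insert N T)) : Nontrivial N := by
  by_contra hN0
  have hNT : N ∈ T := hT.zero_mem N (not_nontrivial_iff_subsingleton.1 hN0)
  exact hN.2 (hT.filtSet_subset (Set.insert_subset hNT subset_rfl))

/-- The modules in `T` that are left orthogonal to `M`, that is, have no nonzero map to `M`. For a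
covering pair it recovers the smaller torsion class from the larger one. -/
def leftOrthogonalIn (T : Set (Mdl Λ)) (M : Mdl Λ) : Set (Mdl Λ) :=
  {X ∈ T | ∀ f : X →ₗ[Λ] M, f = 0}

lemma isTorsionClass_leftOrthogonalIn (hT : IsTorsionClass Λ T) (M : Mdl Λ) :
    IsTorsionClass Λ (leftOrthogonalIn T M) := by
  have factor_closed : ∀ X ∈ leftOrthogonalIn T M, ∀ Y, IsFactor Λ X Y →
      Y ∈ leftOrthogonalIn T M := by
    rintro X ⟨hX, hXM⟩ Y ⟨g, hg⟩
    exact ⟨hT.factor_closed X hX Y ⟨g, hg⟩, fun f =>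
      (LinearMap.cancel_right hg).1 ((hXM (f ∘ₗ g)).trans (LinearMap.zero_comp g).symm)⟩
  refine ⟨fun X hX => hT.fin X hX.1, fun X h => ⟨hT.zero_mem X h, fun f => Subsingleton.elim _ _⟩,
    fun X hX Y ⟨e⟩ => factor_closed X hX Y ⟨e, e.surjective⟩, factor_closed, ?_⟩
  rintro A ⟨hA, hAM⟩ B ⟨hB, hBM⟩ X ⟨f, g, h⟩
  exact ⟨hT.ext_closed A hA B hB X ⟨f, g, h⟩, fun u =>
    eq_zero_of_comp_eq_zero h.exact h.2.1 hBM (hAM (u ∘ₗ f))⟩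

lemma TorsCovers.leftOrthogonalIn_eq (hcov : TorsCovers Λ T' T) (hM : M ∈ T') (hM0 : Nontrivial M)
    (hTM : ∀ X ∈ T, ∀ f : X →ₗ[Λ] M, f = 0) : leftOrthogonalIn T' M = T := by
  obtain ⟨hT', -, hlt, hmin⟩ := hcov
  have hsub : T ⊆ leftOrthogonalIn T' M := fun X hX => ⟨hlt.1 hX, hTM X hX⟩
  have hne : leftOrthogonalIn T' M ≠ T' := by
    intro h
    rw [← h] at hM
    obtain ⟨x, hx⟩ := exists_ne (0 : M)
    exact hx (LinearMap.congr_fun (hM.2 .id) x)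
  by_contra h
  have hlt' : T ⊂ leftOrthogonalIn T' M := hsub.ssubset_of_ne (Ne.symm h)
  exact hne (hmin _ (isTorsionClass_leftOrthogonalIn hT' M) hlt' fun X hX => hX.1)

/-- `M` is minimal, with respect to passing to factor modules, among the modules outside `T`. For a
covering pair, such a module in the larger class is minimal extending for the smaller one. -/
structure IsMinimalOutside (T : Set (Mdl Λ)) (M : Mdl Λ) : Prop where
  notMem : M ∉ T
  properFactor_mem : ∀ N, IsProperFactor Λ M N → N ∈ T

lemma exists_isFactor_isMinimalOutside [IsNoetherian Λ X] (hX : X ∉ T) :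
    ∃ M, IsFactor Λ X M ∧ IsMinimalOutside T M := by
  obtain ⟨_, ⟨M, f, hf, rfl, hM⟩, hmax⟩ := set_has_maximal_iff_noetherian.2 ‹IsNoetherian Λ X›
    {p | ∃ (M : Mdl Λ) (f : X →ₗ[Λ] M), Function.Surjective f ∧ LinearMap.ker f = p ∧ M ∉ T}
    ⟨⊥, X, .id, Function.surjective_id, LinearMap.ker_id, hX⟩
  refine ⟨M, ⟨f, hf⟩, hM, fun N ⟨g, hg, hginj⟩ => ?_⟩
  by_contra hN
  refine hmax _ ⟨N, g ∘ₗ f, hg.comp hf, rfl, hN⟩ ((LinearMap.ker_le_ker_comp f g).lt_of_ne ?_)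
  intro hker
  rw [LinearMap.ker_comp, ← Submodule.comap_bot] at hker
  exact hginj (LinearMap.ker_eq_bot.1 (Submodule.comap_injective_of_surjective hf hker).symm)

namespace IsMinimalOutside

lemma nontrivial (hM : IsMinimalOutside T M) (hT : IsTorsionClass Λ T) : Nontrivial M := by
  by_contra h
  exact hM.notMem (hT.zero_mem M (not_nontrivial_iff_subsingleton.1 h))

lemma hom_eq_zero (hM : IsMinimalOutside T M) (hT : IsTorsionClass Λ T) (hN : N ∈ T)
    (f : N →ₗ[Λ] M) : f = 0 := by
  by_contra hf
  have hrange : Mdl.of Λ (LinearMap.range f) ∈ T :=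
    hT.factor_closed N hN _ ⟨f.rangeRestrict, f.surjective_rangeRestrict⟩
  have hcoker : Mdl.of Λ (M ⧸ LinearMap.range f) ∈ T :=
    hM.properFactor_mem _ (.of_submodule (mt LinearMap.range_eq_bot.1 hf))
  exact hM.notMem (hT.ext_closed _ hrange _ hcoker M (.of_submodule _))

lemma injective_of_ne_zero (hM : IsMinimalOutside T M) (hT : IsTorsionClass Λ T)
    {f : M →ₗ[Λ] M} (hf : f ≠ 0) : Function.Injective f := by
  by_contra hinj
  have hrange : Mdl.of Λ (LinearMap.range f) ∈ T :=
    hM.properFactor_mem _ ⟨f.rangeRestrict, f.surjective_rangeRestrict,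
      fun h => hinj (Subtype.val_injective.comp h)⟩
  have hincl : (LinearMap.range f).subtype = 0 := hM.hom_eq_zero hT hrange _
  have hfac : f = (LinearMap.range f).subtype ∘ₗ f.rangeRestrict := rfl
  exact hf (by rw [hfac, hincl, LinearMap.zero_comp])

lemma isBrick [Module.Finite Λ M] [IsArtinian Λ M] (hM : IsMinimalOutside T M)
    (hT : IsTorsionClass Λ T) : IsBrick Λ M :=
  ⟨inferInstance, hM.nontrivial hT, fun f hf =>
    IsArtinian.bijective_of_injective_endomorphism f (hM.injective_of_ne_zero hT hf)⟩

lemma filt_insert_of_isFactor (hM : IsMinimalOutside T M) (hN : IsFactor Λ M N) :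
    Filt Λ (insert M T) N := by
  obtain ⟨f, hf⟩ := hN
  by_cases hinj : Function.Injective f
  · exact (Filt.of_mem (Set.mem_insert M T)).of_linearEquiv (.ofBijective f ⟨hinj, hf⟩)
  · exact .of_mem (.inr (hM.properFactor_mem N ⟨f, hf, hinj⟩))

lemma isTorsionClass_filtSet_insert [Module.Finite Λ M] (hM : IsMinimalOutside T M)
    (hT : IsTorsionClass Λ T) : IsTorsionClass Λ (FiltSet Λ (insert M T)) := by
  refine isTorsionClass_filtSet ?_ ?_
  · rintro X (rfl | hX)
    exacts [inferInstance, hT.fin X hX]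
  · rintro X (rfl | hX) Y hY
    exacts [hM.filt_insert_of_isFactor hY, .of_mem (.inr (hT.factor_closed X hX Y hY))]

lemma filtSet_insert_eq (hM : IsMinimalOutside T M) (hcov : TorsCovers Λ T' T) (hMT' : M ∈ T') :
    FiltSet Λ (insert M T) = T' := by
  obtain ⟨hT', hT, hlt, hmin⟩ := hcov
  have : Module.Finite Λ M := hT'.fin M hMT'
  have hTF : T ⊂ FiltSet Λ (insert M T) :=
    (Set.ssubset_iff_of_subset fun X hX => .of_mem (.inr hX)).2
      ⟨M, .of_mem (Set.mem_insert M T), hM.notMem⟩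
  exact hmin _ (hM.isTorsionClass_filtSet_insert hT) hTF
    (hT'.filtSet_subset (Set.insert_subset hMT' hlt.1))

lemma isMinExt [IsArtinian Λ M] (hM : IsMinimalOutside T M) (hcov : TorsCovers Λ T' T)
    (hMT' : M ∈ T') : IsMinExt Λ T M := by
  have ⟨hT', hT, hlt, _⟩ := hcov
  have : Module.Finite Λ M := hT'.fin M hMT'
  have hTM (X : Mdl Λ) (hX : X ∈ T) (f : X →ₗ[Λ] M) : f = 0 := hM.hom_eq_zero hT hX f
  refine ⟨inferInstance, hM.properFactor_mem, fun X N f g h hsplit hN => ?_, hTM⟩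
  rw [← hcov.leftOrthogonalIn_eq hMT' (hM.nontrivial hT) hTM]
  refine ⟨hT'.ext_closed M hMT' N (hlt.1 hN) X ⟨f, g, h⟩, fun u => ?_⟩
  by_contra hu
  have huf : u ∘ₗ f ≠ 0 := fun h0 => hu (eq_zero_of_comp_eq_zero h.exact h.2.1 (hTM N hN) h0)
  exact hsplit (exists_section_of_bijective_comp h.exact h.1 h.2.1 ((hM.isBrick hT).2.2 _ huf))

end IsMinimalOutside

end TorsionClasses

theorem statement10_general (Λ : Type) [Ring Λ] (T T' : Set (Mdl Λ)) (hcov : TorsCovers Λ T' T)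
    (hlen : ∀ M ∈ T', IsFiniteLength Λ M) :
    (∃ M : Mdl Λ, IsBrick Λ M ∧ IsMinExt Λ T M ∧ T' = FiltSet Λ (insert M T)) ∧
    (∀ M M' : Mdl Λ, T' = FiltSet Λ (insert M T) → T' = FiltSet Λ (insert M' T) →
      MIso Λ M M') := by
  have ⟨hT', hT, hlt, _⟩ := hcov
  obtain ⟨X, hXT', hXT⟩ := Set.exists_of_ssubset hlt
  have : IsNoetherian Λ X := (isFiniteLength_iff_isNoetherian_isArtinian.1 (hlen X hXT')).1
  obtain ⟨M, hXM, hM⟩ := exists_isFactor_isMinimalOutside hXT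
  have hMT' : M ∈ T' := hT'.factor_closed X hXT' M hXM
  have : IsArtinian Λ M := (isFiniteLength_iff_isNoetherian_isArtinian.1 (hlen M hMT')).2
  have : Module.Finite Λ M := hT'.fin M hMT'
  have hfilt : T' = FiltSet Λ (insert M T) := (hM.filtSet_insert_eq hcov hMT').symm
  have hiso (N : Mdl Λ) (hN : T' = FiltSet Λ (insert N T)) : MIso Λ N M :=
    have hNT' : N ∈ T' := hN.ge (.of_mem (Set.mem_insert N T))
    mIso_of_filt_insert (hM.nontrivial hT) (nontrivial_of_ssubset_filtSet_insert hT (hN ▸ hlt))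
      (fun _ hX => hM.hom_eq_zero hT hX) (hN.le hMT') (hfilt.le hNT')
  refine ⟨⟨M, hM.isBrick hT, hM.isMinExt hcov hMT', hfilt⟩, fun N N' hN hN' => ?_⟩
  obtain ⟨e⟩ := hiso N hN
  obtain ⟨e'⟩ := hiso N' hN'
  exact ⟨e.trans e'.symm⟩

/-- For each covering pair `T' ⋗ T` in `tors Λ` there exists an
indecomposable module `M`, unique up to isomorphism, with `T' = Filt(T ∪ {M})`;
moreover `M` is a minimal extending module for `T`.  (Hence `T' = Filt(T ∪ {M}) ↦ [M]`
is inverse to the bijection `η_T : [M] ↦ Filt(T ∪ {M})` from `ME(T)` to the upper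
covers of `T`.) -/
theorem statement10 (k : Type) [Field k] (Λ : Type) [Ring Λ] [Algebra k Λ]
    [FiniteDimensional k Λ] (T T' : Set (Mdl Λ)) (hcov : TorsCovers Λ T' T) :
    (∃ M : Mdl Λ, Indec Λ M ∧ IsMinExt Λ T M ∧ T' = FiltSet Λ (insert M T)) ∧
    (∀ M M' : Mdl Λ, Indec Λ M → Indec Λ M' → T' = FiltSet Λ (insert M T) →
      T' = FiltSet Λ (insert M' T) → MIso Λ M M') := by
  have : IsArtinianRing Λ := .of_finite k Λ
  obtain ⟨⟨M, hM, hmin, hfilt⟩, huniq⟩ := statement10_general Λ T T' hcov fun M hM =>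
    ((IsArtinianRing.tfae Λ M).out 0 3).1 (hcov.1.fin M hM)
  exact ⟨⟨M, hM.indec, hmin, hfilt⟩, fun M M' _ _ => huniq M M'⟩
end

section
/- If M is a brick over Λ, then M is a minimal co-extending module for the torsion-free class Filt(Gen(M))^⊥. -/
variable (Λ : Type) [Ring Λ]

/-!
By left exactness of `Hom(-, X)`, a finitely generated module `X` lies in `Filt(Gen(M))^⊥` as soon
as `Hom(M, X) = 0`. If `M` is a brick, any composite `M → X → M` is either zero or bijective, and
in the latter case `X → M` splits. Hence a nonzero map from `M` to a submodule of `M` forces that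
submodule to be all of `M`, and for a non-split extension `0 → F' → X → M → 0` every map `M → X`
factors through `F'`.
-/

section

variable {Λ}

theorem IsSES.finite {A B C : Mdl Λ} {f : A.carrier →ₗ[Λ] B.carrier}
    {g : B.carrier →ₗ[Λ] C.carrier} (h : IsSES Λ f g) [Module.Finite Λ A.carrier]
    [Module.Finite Λ C.carrier] : Module.Finite Λ B.carrier :=
  Module.Finite.of_exact (LinearMap.exact_iff.mpr h.2.2.symm) h.2.1

theorem IsSES.eq_zero_of_comp_eq_zero {A B C N : Mdl Λ} {f : A.carrier →ₗ[Λ] B.carrier}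
    {g : B.carrier →ₗ[Λ] C.carrier} (h : IsSES Λ f g)
    (hA : ∀ φ : N.carrier →ₗ[Λ] A.carrier, φ = 0) {φ : N.carrier →ₗ[Λ] B.carrier}
    (hφ : g.comp φ = 0) : φ = 0 := by
  have mem_range (x) : φ x ∈ LinearMap.range f := h.2.2 ▸ LinearMap.congr_fun hφ x
  let e := LinearEquiv.ofInjective f h.1
  have codRestrict_eq_zero : φ.codRestrict (LinearMap.range f) mem_range = 0 := by
    rw [← LinearMap.cancel_left e.symm.injective, LinearMap.comp_zero]
    exact hA _
  rw [← LinearMap.subtype_comp_codRestrict φ _ mem_range, codRestrict_eq_zero, LinearMap.comp_zero]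

theorem IsSES.hom_eq_zero {A B C X : Mdl Λ} {f : A.carrier →ₗ[Λ] B.carrier}
    {g : B.carrier →ₗ[Λ] C.carrier} (h : IsSES Λ f g)
    (hA : ∀ φ : A.carrier →ₗ[Λ] X.carrier, φ = 0)
    (hC : ∀ φ : C.carrier →ₗ[Λ] X.carrier, φ = 0)
    (φ : B.carrier →ₗ[Λ] X.carrier) : φ = 0 := by
  have ker_le : LinearMap.ker g ≤ LinearMap.ker φ := by
    rw [← h.2.2, LinearMap.range_le_ker_iff]
    exact hA (φ.comp f)
  let e := g.quotKerEquivOfSurjective h.2.1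
  have lift_eq_zero : (LinearMap.ker g).liftQ φ ker_le = 0 := by
    rw [← LinearMap.cancel_right e.symm.surjective, LinearMap.zero_comp]
    exact hC _
  rw [← Submodule.liftQ_mkQ _ φ ker_le, lift_eq_zero, LinearMap.zero_comp]

theorem Filt.hom_eq_zero {S : Set (Mdl Λ)} {N X : Mdl Λ} (hN : Filt Λ S N)
    (hS : ∀ G ∈ S, ∀ φ : G.carrier →ₗ[Λ] X.carrier, φ = 0) :
    ∀ φ : N.carrier →ₗ[Λ] X.carrier, φ = 0 := by
  induction hN with
  | of_subsingleton N h => exact fun φ => Subsingleton.elim φ 0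
  | step N K G hG _ e ih =>
    obtain ⟨e⟩ := e
    have ses : IsSES Λ (A := Mdl.of Λ K) K.subtype (e.toLinearMap.comp K.mkQ) :=
      ⟨K.subtype_injective, e.surjective.comp K.mkQ_surjective,
        K.range_subtype.trans (K.ker_mkQ.symm.trans (e.ker_comp K.mkQ).symm)⟩
    exact ses.hom_eq_zero ih (hS G hG)

theorem subset_filtSet (S : Set (Mdl Λ)) : S ⊆ FiltSet Λ S := fun M hM =>
  have bot_filt : Filt Λ S (Mdl.of Λ (⊥ : Submodule Λ M.carrier)) :=
    .of_subsingleton _ (inferInstanceAs (Subsingleton (⊥ : Submodule Λ M.carrier)))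
  Filt.step M ⊥ M hM bot_filt ⟨Submodule.quotEquivOfEqBot ⊥ rfl⟩

theorem mem_genSet_self (M : Mdl Λ) : M ∈ GenSet Λ M :=
  ⟨1, LinearMap.proj 0, LinearMap.proj_surjective 0⟩

theorem hom_eq_zero_of_mem_genSet {M N X : Mdl Λ} (hN : N ∈ GenSet Λ M)
    (hX : ∀ φ : M.carrier →ₗ[Λ] X.carrier, φ = 0) (φ : N.carrier →ₗ[Λ] X.carrier) : φ = 0 := by
  obtain ⟨n, p, hp⟩ := hN
  rw [← LinearMap.cancel_right hp, LinearMap.zero_comp]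
  exact LinearMap.pi_ext' fun i => hX _

theorem perp_filtSet (S : Set (Mdl Λ)) : Perp Λ (FiltSet Λ S) = Perp Λ S :=
  Set.ext fun _ => and_congr_right fun _ =>
    ⟨fun h N hN => h N (subset_filtSet S hN), fun h _ hN => Filt.hom_eq_zero hN h⟩

theorem perp_genSet (M : Mdl Λ) : Perp Λ (GenSet Λ M) = Perp Λ {M} :=
  Set.ext fun _ => and_congr_right fun _ =>
    ⟨fun h => by rintro _ rfl; exact h _ (mem_genSet_self _),
      fun h _ hN => hom_eq_zero_of_mem_genSet hN (h M rfl)⟩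

theorem mem_perp_filtSet_genSet_iff {M X : Mdl Λ} :
    X ∈ Perp Λ (FiltSet Λ (GenSet Λ M)) ↔
      Module.Finite Λ X.carrier ∧ ∀ φ : M.carrier →ₗ[Λ] X.carrier, φ = 0 := by
  rw [perp_filtSet, perp_genSet]
  simp only [Perp, Set.mem_ofPred_eq, Set.mem_singleton_iff, forall_eq]

theorem IsBrick.exists_section_of_comp_ne_zero {M X : Mdl Λ} (hM : IsBrick Λ M)
    {g : X.carrier →ₗ[Λ] M.carrier} {φ : M.carrier →ₗ[Λ] X.carrier} (hφ : g.comp φ ≠ 0) :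
    ∃ s : M.carrier →ₗ[Λ] X.carrier, g.comp s = LinearMap.id :=
  let e := LinearEquiv.ofBijective (g.comp φ) (hM.2.2 _ hφ)
  ⟨φ.comp e.symm.toLinearMap, e.comp_symm⟩

theorem IsBrick.hom_eq_zero_of_isProperSubmoduleOf {M N : Mdl Λ} (hM : IsBrick Λ M)
    (hN : IsProperSubmoduleOf Λ N M) (φ : M.carrier →ₗ[Λ] N.carrier) : φ = 0 := by
  obtain ⟨i, hi, not_surjective⟩ := hN
  by_contra hφ
  have comp_ne_zero : i.comp φ ≠ 0 := fun h =>
    hφ ((LinearMap.cancel_left hi).mp (h.trans (LinearMap.comp_zero i).symm))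
  obtain ⟨s, hs⟩ := hM.exists_section_of_comp_ne_zero comp_ne_zero
  exact not_surjective (LinearMap.surjective_of_comp_eq_id s i hs)

theorem IsBrick.hom_eq_zero_of_not_splitsSES {M X F : Mdl Λ} (hM : IsBrick Λ M)
    {f : F.carrier →ₗ[Λ] X.carrier} {g : X.carrier →ₗ[Λ] M.carrier} (hfg : IsSES Λ f g)
    (not_splits : ¬ SplitsSES Λ f g) (hF : ∀ φ : M.carrier →ₗ[Λ] F.carrier, φ = 0)
    (φ : M.carrier →ₗ[Λ] X.carrier) : φ = 0 := by
  refine hfg.eq_zero_of_comp_eq_zero hF ?_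
  by_contra hφ
  exact not_splits (hM.exists_section_of_comp_ne_zero hφ)

theorem statement14_general {M : Mdl Λ} [IsNoetherian Λ M.carrier] (hM : IsBrick Λ M) :
    IsMinCoExt Λ (Perp Λ (FiltSet Λ (GenSet Λ M))) M where
  fin := hM.1
  p1 N hN := by
    have ⟨i, hi, _⟩ := hN
    exact mem_perp_filtSet_genSet_iff.mpr
      ⟨Module.Finite.of_injective i hi, hM.hom_eq_zero_of_isProperSubmoduleOf hN⟩
  p2 X F f g hfg not_splits hF := by
    obtain ⟨_, hom_eq_zero⟩ := mem_perp_filtSet_genSet_iff.mp hF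
    exact mem_perp_filtSet_genSet_iff.mpr
      ⟨hfg.finite, hM.hom_eq_zero_of_not_splitsSES hfg not_splits hom_eq_zero⟩
  p3 _ hF := (mem_perp_filtSet_genSet_iff.mp hF).2

end

/-- If `M` is a brick over `Λ`, then `M` is a minimal co-extending
module for the torsion-free class `Filt(Gen(M))^⊥`. -/
theorem statement14 (k : Type) [Field k] (Λ : Type) [Ring Λ] [Algebra k Λ]
    [FiniteDimensional k Λ] (M : Mdl Λ) (hM : IsBrick Λ M) :
    IsMinCoExt Λ (Perp Λ (FiltSet Λ (GenSet Λ M))) M := by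
  have : Module.Finite Λ M.carrier := hM.1
  have : IsNoetherianRing Λ := isNoetherian_of_tower k inferInstance
  exact statement14_general hM
end

section
/- Let L be a complete lattice and suppose ⋁A is the canonical join representation of an element w ∈ L. Then for every subset A' ⊆ A, the join ⋁A' is the canonical join representation of the element ⋁A'. -/
/-- A join representation `⋁ A` (of the element `⋁ A`) in a complete lattice is
irredundant if every proper subset has strictly smaller join. -/
def JoinIrredundant {L : Type*} [CompleteLattice L] (A : Set L) : Prop :=
  ∀ B : Set L, B ⊂ A → sSup B < sSup A

/-- `A` is the canonical join representation of its join `⋁ A` in a complete lattice: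
`⋁ A` is irredundant, and for every irredundant join representation `⋁ B` of the same
element one has `A ≪ B`, i.e. every `a ∈ A` satisfies `a ≤ b` for some `b ∈ B`. -/
def IsCanonicalJoinRep {L : Type*} [CompleteLattice L] (A : Set L) : Prop :=
  JoinIrredundant A ∧
    ∀ B : Set L, sSup B = sSup A → JoinIrredundant B → ∀ a ∈ A, ∃ b ∈ B, a ≤ b

/-!
If `A` is canonical and `a ∈ A`, then `x ⊔ y = ⋁ A` forces `a ≤ x` or `a ≤ y`, because `{x, y}` is
irredundant as soon as `x` and `y` are incomparable. Taking `y = ⋁ D` with `D ⊆ A`, irredundance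
of `A` excludes the second alternative for every `a ∈ A \ D`, so `⋁ (A \ D) ≤ x`.

Now let `⋁ B` be an irredundant representation of `⋁ A'`. If `x ∈ B` could be removed from
`B ∪ (A \ A')` without changing the join `⋁ A`, then `⋁ (B \ {x}) ⊔ ⋁ (A \ A') = ⋁ A`, hence
`⋁ A' ≤ ⋁ (B \ {x})`, contradicting irredundance of `B`; and no `x ∈ A \ A'` can be removed, since
the rest has join at most `⋁ (A \ {x})`. So `B ∪ (A \ A')` is an irredundant representation of
`⋁ A`, and by canonicity each `a ∈ A'` lies below one of its elements, which cannot belong to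
`A \ A'` because `A` is irredundant.
-/

section

variable {L : Type*} [CompleteLattice L] {A A' B C D : Set L} {a x y : L}

theorem sup_sSup_sdiff_singleton (ha : a ∈ A) : a ⊔ sSup (A \ {a}) = sSup A := by
  rw [← sSup_insert, Set.insert_sdiff_self_of_mem ha]

theorem sSup_union_sdiff_of_sSup_eq (hA' : A' ⊆ A) (h : sSup B = sSup A') :
    sSup (B ∪ (A \ A')) = sSup A := by
  rw [sSup_union, h, ← sSup_union, Set.union_sdiff_cancel hA']

theorem joinIrredundant_iff_forall_not_le_sSup_sdiff :
    JoinIrredundant A ↔ ∀ a ∈ A, ¬ a ≤ sSup (A \ {a}) := by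
  constructor
  · intro hA a ha hle
    have hlt : sSup (A \ {a}) < sSup A := hA _ (Set.sdiff_singleton_ssubset.2 ha)
    exact hlt.not_ge ((sup_sSup_sdiff_singleton ha).ge.trans (sup_le hle le_rfl))
  · intro h B hBA
    obtain ⟨a, ha, haB⟩ := Set.exists_of_ssubset hBA
    refine (sSup_le_sSup hBA.subset).lt_of_not_ge fun hle => h a ha ?_
    calc a ≤ sSup A := le_sSup ha
      _ ≤ sSup B := hle
      _ ≤ sSup (A \ {a}) := sSup_le_sSup (Set.subset_sdiff_singleton hBA.subset haB)

theorem JoinIrredundant.mem_of_le_sSup (hA : JoinIrredundant A) (ha : a ∈ A) (hC : C ⊆ A)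
    (h : a ≤ sSup C) : a ∈ C := by
  by_contra haC
  exact joinIrredundant_iff_forall_not_le_sSup_sdiff.1 hA a ha
    (h.trans (sSup_le_sSup (Set.subset_sdiff_singleton hC haC)))

theorem JoinIrredundant.subset (hA : JoinIrredundant A) (hA' : A' ⊆ A) : JoinIrredundant A' :=
  joinIrredundant_iff_forall_not_le_sSup_sdiff.2 fun _ ha hle =>
    (hA.mem_of_le_sSup (hA' ha) (Set.sdiff_subset.trans hA') hle).2 rfl

theorem joinIrredundant_pair (hxy : ¬ x ≤ y) (hyx : ¬ y ≤ x) : JoinIrredundant {x, y} := by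
  have hne : x ≠ y := fun h => hxy h.le
  rw [joinIrredundant_iff_forall_not_le_sSup_sdiff]
  rintro a (rfl | rfl)
  · rwa [Set.pair_sdiff_left hne, sSup_singleton]
  · rwa [Set.pair_sdiff_right hne, sSup_singleton]

namespace IsCanonicalJoinRep

theorem le_or_le_of_sup_eq_sSup (hA : IsCanonicalJoinRep A) (ha : a ∈ A) (h : x ⊔ y = sSup A) :
    a ≤ x ∨ a ≤ y := by
  have hle : a ≤ x ⊔ y := h ▸ le_sSup ha
  by_cases hxy : x ≤ y
  · exact Or.inr (sup_eq_right.2 hxy ▸ hle)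
  by_cases hyx : y ≤ x
  · exact Or.inl (sup_eq_left.2 hyx ▸ hle)
  obtain ⟨b, rfl | rfl, hab⟩ :=
    hA.2 {x, y} (sSup_pair.trans h) (joinIrredundant_pair hxy hyx) a ha
  · exact Or.inl hab
  · exact Or.inr hab

theorem sSup_sdiff_le_of_sup_sSup_eq (hA : IsCanonicalJoinRep A) (hD : D ⊆ A)
    (h : x ⊔ sSup D = sSup A) : sSup (A \ D) ≤ x :=
  sSup_le fun _ ha => (hA.le_or_le_of_sup_eq_sSup ha.1 h).resolve_right fun hle =>
    ha.2 (hA.1.mem_of_le_sSup ha.1 hD hle)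

theorem joinIrredundant_union_sdiff (hA : IsCanonicalJoinRep A) (hA' : A' ⊆ A)
    (hB : JoinIrredundant B) (hBA' : sSup B = sSup A') : JoinIrredundant (B ∪ (A \ A')) := by
  rw [joinIrredundant_iff_forall_not_le_sSup_sdiff]
  intro x hx hle
  by_cases hxB : x ∈ B
  · have hrest : sSup ((B ∪ (A \ A')) \ {x}) ≤ sSup (B \ {x}) ⊔ sSup (A \ A') := by
      rw [← sSup_union, Set.union_sdiff_distrib]
      exact sSup_le_sSup (Set.union_subset_union_right _ Set.sdiff_subset)
    have hsup_erase : sSup (B \ {x}) ⊔ sSup (A \ A') = sSup A := by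
      rw [← sup_eq_right.2 (hle.trans hrest), ← sup_assoc, sup_sSup_sdiff_singleton hxB,
        ← sSup_union, sSup_union_sdiff_of_sSup_eq hA' hBA']
    have hA'_le : sSup A' ≤ sSup (B \ {x}) := by
      simpa only [Set.sdiff_sdiff_cancel_left hA'] using
        hA.sSup_sdiff_le_of_sup_sSup_eq Set.sdiff_subset hsup_erase
    have hx_le : x ≤ sSup (B \ {x}) := (le_sSup hxB).trans (hBA'.le.trans hA'_le)
    exact (hB.mem_of_le_sSup hxB Set.sdiff_subset hx_le).2 rfl
  · obtain ⟨hxA, hxA'⟩ := hx.resolve_left hxB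
    have hB_le : sSup B ≤ sSup (A \ {x}) :=
      hBA'.le.trans (sSup_le_sSup (Set.subset_sdiff_singleton hA' hxA'))
    have hrest : sSup ((B ∪ (A \ A')) \ {x}) ≤ sSup (A \ {x}) := by
      rw [Set.union_sdiff_distrib, sSup_union]
      exact sup_le ((sSup_le_sSup Set.sdiff_subset).trans hB_le)
        (sSup_le_sSup (Set.sdiff_subset_sdiff_left Set.sdiff_subset))
    exact (hA.1.mem_of_le_sSup hxA Set.sdiff_subset (hle.trans hrest)).2 rfl

end IsCanonicalJoinRep

end

/-- If `⋁ A` is the canonical join representation of an element `w` of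
a complete lattice `L`, then for every subset `A' ⊆ A` the join `⋁ A'` is the canonical
join representation of the element `⋁ A'`. -/
theorem statement16 {L : Type*} [CompleteLattice L] (A : Set L)
    (hA : IsCanonicalJoinRep A) (A' : Set L) (hA' : A' ⊆ A) :
    IsCanonicalJoinRep A' := by
  refine ⟨hA.1.subset hA', fun B hBA' hB a ha => ?_⟩
  have hsup : sSup (B ∪ (A \ A')) = sSup A := sSup_union_sdiff_of_sSup_eq hA' hBA'
  obtain ⟨b, hb | hb, hab⟩ :=
    hA.2 _ hsup (hA.joinIrredundant_union_sdiff hA' hB hBA') a (hA' ha)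
  · exact ⟨b, hb, hab⟩
  · have haA' : a ∈ A \ A' :=
      hA.1.mem_of_le_sSup (hA' ha) Set.sdiff_subset (hab.trans (le_sSup hb))
    exact absurd ha haA'.2
end
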